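/- arXiv:1503.06820 — 2 statements merged into one kernel-verified Lean document; each statement's English description precedes it below -/
import Mathlib

section
/- Let α be a finite alphabet and let L ⊆ α* be a regular language (i.e., the language accepted by some finite-state automaton over α). Let φ : α → ℕ satisfy φ(a) ≥ 1 for every a ∈ α, extended to words by φ(a_1⋯a_m) = Σ_{j=1}^m φ(a_j). For each i ≥ 0 let c_i = #{w ∈ L : φ(w) = i} (a finite number). Then the growth series Σ_{i≥0} c_i z^i is rational: there exist polynomials P, Q ∈ ℚ[z] with Q(0) ≠ 0 such that Q(z)·Σ_{i≥0} c_i z^i = P(z) as formal power series over ℚ. -/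
/-- Words accepted from state `s` of weight `i`. -/
def RGWords {α σ : Type} (M : DFA α σ) (φ : α → ℕ) (s : σ) (i : ℕ) : Type :=
  {w : List α // M.evalFrom s w ∈ M.accept ∧ (w.map φ).sum = i}

theorem rg_finite {α σ : Type} [Fintype α] (M : DFA α σ) (φ : α → ℕ) (hφ : ∀ a, 1 ≤ φ a)
    (s : σ) (i : ℕ) : Finite (RGWords M φ s i) := by
  have hlen : ∀ w : List α, w.length ≤ (w.map φ).sum := by
    intro w
    induction w with
    | nil => simp
    | cons a w ih => have := hφ a; simp; omega
  refine Set.Finite.to_subtype (s := {w : List α | M.evalFrom s w ∈ M.accept ∧ (w.map φ).sum = i}) ?_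
  refine (List.finite_length_le α i).subset ?_
  rintro w ⟨_, h⟩
  have := hlen w
  simp only [Set.mem_ofPred_eq]
  omega

/-- Split a word into empty or first letter plus tail. -/
def rgEquiv {α σ : Type} (M : DFA α σ) (φ : α → ℕ) (s : σ) (i : ℕ) :
    RGWords M φ s i ≃ {_u : Unit // s ∈ M.accept ∧ i = 0} ⊕
      (Σ a : α, {w : List α // M.evalFrom (M.step s a) w ∈ M.accept ∧ φ a + (w.map φ).sum = i}) where
  toFun w := match w with
    | ⟨[], h⟩ => Sum.inl ⟨(), by simpa [eq_comm] using h⟩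
    | ⟨a :: w, h⟩ => Sum.inr ⟨a, w, by simpa using h⟩
  invFun x := match x with
    | Sum.inl ⟨_, h⟩ => ⟨[], by simpa [eq_comm] using h⟩
    | Sum.inr ⟨a, w, h⟩ => ⟨a :: w, by simpa using h⟩
  left_inv := by rintro ⟨_ | ⟨a, w⟩, h⟩ <;> rfl
  right_inv := by rintro (⟨_, h⟩ | ⟨a, w, h⟩) <;> rfl

open Classical in
theorem rg_card {α σ : Type} [Fintype α] (M : DFA α σ) (φ : α → ℕ) (hφ : ∀ a, 1 ≤ φ a)
    (s : σ) (i : ℕ) : Nat.card (RGWords M φ s i) = (if s ∈ M.accept ∧ i = 0 then 1 else 0) +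
      ∑ a, if φ a ≤ i then Nat.card (RGWords M φ (M.step s a) (i - φ a)) else 0 := by
  have key : ∀ a, φ a ≤ i → 
      {w : List α // M.evalFrom (M.step s a) w ∈ M.accept ∧ φ a + (w.map φ).sum = i} =
        RGWords M φ (M.step s a) (i - φ a) := by
    intro a h
    unfold RGWords
    have hp : ∀ w : List α, (φ a + (w.map φ).sum = i) = ((w.map φ).sum = i - φ a) := by
      intro w
      apply propext
      omega
    simp only [hp]
  have key2 : ∀ a, ¬ φ a ≤ i → 
      IsEmpty {w : List α // M.evalFrom (M.step s a) w ∈ M.accept ∧ φ a + (w.map φ).sum = i} := by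
    intro a h
    refine ⟨fun w => ?_⟩
    have := w.2.2
    omega
  have hf : ∀ a, Finite
      {w : List α // M.evalFrom (M.step s a) w ∈ M.accept ∧ φ a + (w.map φ).sum = i} := by
    intro a
    by_cases h : φ a ≤ i
    · rw [key a h]; exact rg_finite M φ hφ _ _
    · have := key2 a h; infer_instance
  rw [Nat.card_congr (rgEquiv M φ s i), Nat.card_sum, Nat.card_sigma]
  congr 1
  · split_ifs with h
    · simp [h]
    · have : IsEmpty {_u : Unit // s ∈ M.accept ∧ i = 0} := ⟨fun u => h u.2⟩
      simp
  · refine Finset.sum_congr rfl fun a _ => ?_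
    split_ifs with h
    · rw [key a h]
    · have := key2 a h; simp

open Classical in
theorem rg_series {α σ : Type} [Fintype α] (M : DFA α σ) (φ : α → ℕ) (hφ : ∀ a, 1 ≤ φ a)
    (s : σ) : PowerSeries.mk (fun i => (Nat.card (RGWords M φ s i) : ℚ)) =
      (if s ∈ M.accept then 1 else 0) + ∑ a, (PowerSeries.X : PowerSeries ℚ) ^ φ a *
        PowerSeries.mk (fun i => (Nat.card (RGWords M φ (M.step s a) i) : ℚ)) := by
  ext i
  rw [PowerSeries.coeff_mk, rg_card M φ hφ, map_add, map_sum]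
  push_cast
  congr 1
  · by_cases h : s ∈ M.accept <;> simp [h, PowerSeries.coeff_one]
  · refine Finset.sum_congr rfl fun a _ => ?_
    rw [PowerSeries.coeff_X_pow_mul']
    simp

/-- Theorem 3.7: the growth series of a regular language, with respect to any weighting
`φ` with `φ(a) ≥ 1` for all letters `a`, is a rational function. -/
theorem regular_language_rational_growth
    {α : Type} [Fintype α] (L : Language α)
    (hreg : ∃ (σ : Type) (_ : Fintype σ) (M : DFA α σ), M.accepts = L)
    (φ : α → ℕ) (hφ : ∀ a, 1 ≤ φ a) :
    ∃ P Q : Polynomial ℚ, Q.coeff 0 ≠ 0 ∧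
      (Q : PowerSeries ℚ) *
          PowerSeries.mk
            (fun i => (Nat.card {w : List α // w ∈ L ∧ (w.map φ).sum = i} : ℚ)) =
        (P : PowerSeries ℚ) := by
  classical
  obtain ⟨σ, _, M, rfl⟩ := hreg
  let B : Matrix σ σ (Polynomial ℚ) := fun s t =>
    ∑ a, if M.step s a = t then Polynomial.X ^ φ a else 0
  have hBa : ∀ s t, B s t = ∑ a, if M.step s a = t then Polynomial.X ^ φ a else 0 :=
    fun _ _ => rfl
  clear_value B
  let A : Matrix σ σ (Polynomial ℚ) := 1 - B
  let v : σ → Polynomial ℚ := fun s => if s ∈ M.accept then 1 else 0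
  let F : σ → PowerSeries ℚ := fun s => PowerSeries.mk (fun i => (Nat.card (RGWords M φ s i) : ℚ))
  let c : Polynomial ℚ →+* PowerSeries ℚ := Polynomial.coeToPowerSeries.ringHom
  have hc : ∀ p, c p = (p : PowerSeries ℚ) := fun p => rfl
  have hB : (B.map c).mulVec F = fun s => ∑ a, (PowerSeries.X : PowerSeries ℚ) ^ φ a *
      F (M.step s a) := by
    funext s
    simp only [Matrix.mulVec, dotProduct, Matrix.map_apply, hBa, map_sum, Finset.sum_mul]
    rw [Finset.sum_comm]
    refine Finset.sum_congr rfl fun a _ => ?_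
    rw [Finset.sum_eq_single (M.step s a)]
    · simp [hc]
    · intro t _ ht
      simp [ht.symm]
    · simp
  have hA : (A.map c).mulVec F = c ∘ v := by
    have : A.map c = 1 - B.map c := by
      have := map_sub c.mapMatrix 1 B
      simpa using this
    rw [this, Matrix.sub_mulVec, Matrix.one_mulVec, hB]
    funext s
    have := rg_series M φ hφ s
    simp only [Pi.sub_apply, Function.comp, v]
    rw [sub_eq_iff_eq_add]
    refine this.trans ?_
    congr 1
    split_ifs <;> simp
  have hdet : (c A.det) • F = c ∘ (A.adjugate.mulVec v) := by
    have h1 := congrArg ((A.map c).adjugate.mulVec) hA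
    rw [Matrix.mulVec_mulVec, Matrix.adjugate_mul, Matrix.smul_mulVec, Matrix.one_mulVec] at h1
    have h2 : (A.map c).det = c A.det := (RingHom.map_det c A).symm
    have h3 : (A.map c).adjugate = A.adjugate.map c := (RingHom.map_adjugate c A).symm
    rw [h2, h3] at h1
    rw [h1]
    funext s
    exact (RingHom.map_mulVec c A.adjugate v s).symm
  refine ⟨A.adjugate.mulVec v M.start, A.det, ?_, ?_⟩
  · have h0 : (Polynomial.constantCoeff A.det : ℚ) = 1 := by
      rw [RingHom.map_det]
      have hz : (Polynomial.constantCoeff (R := ℚ)).mapMatrix B = 0 := by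
        ext s t
        simp only [RingHom.mapMatrix_apply, Matrix.map_apply, hBa, map_sum, Matrix.zero_apply]
        refine Finset.sum_eq_zero fun a _ => ?_
        have := hφ a
        split_ifs
        · simp [Polynomial.coeff_X_pow]; omega
        · simp
      simp only [A]
      rw [map_sub, hz]
      simp
    rw [Polynomial.constantCoeff_apply] at h0
    rw [h0]
    exact one_ne_zero
  · exact congrFun hdet M.start
end

section
/- Let p ∈ ℤ[X] be a monic polynomial satisfying 2·|p|_∞ > |p|_1, and let n ≥ 1. Let α be the finite alphabet {c ∈ ℤ : |c| ≤ n}. Then the language L = { c_0 c_1 ⋯ c_m ∈ α* : p divides Σ_{j=0}^m c_j X^j in ℤ[X] } is a regular language over α. -/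
/-- The polynomial `Σ_j c_j X^j` associated to the list of coefficients `c_0 c_1 ⋯ c_m`. -/
noncomputable def listToPoly : List ℤ → Polynomial ℤ
  | [] => 0
  | c :: rest => Polynomial.C c + Polynomial.X * listToPoly rest

/-- `|p|_∞` for an ordinary polynomial. -/
noncomputable def polyInfNorm (p : Polynomial ℤ) : ℕ :=
  p.support.sup fun i => (p.coeff i).natAbs

/-- `|p|_1` for an ordinary polynomial. -/
noncomputable def polyOneNorm (p : Polynomial ℤ) : ℕ :=
  ∑ i ∈ p.support, (p.coeff i).natAbs

open Polynomial in
lemma aux_coeff_mul (p q : Polynomial ℤ) (m : ℕ) :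
    (p * q).coeff m = ∑ i ∈ p.support, p.coeff i * (if i ≤ m then q.coeff (m - i) else 0) := by
  conv_lhs => rw [p.as_sum_support_C_mul_X_pow]
  rw [Finset.sum_mul, Polynomial.finsetSum_coeff]
  refine Finset.sum_congr rfl fun i _ => ?_
  rw [mul_assoc, Polynomial.coeff_C_mul, Polynomial.coeff_X_pow_mul']

lemma aux_one_cast (p : Polynomial ℤ) :
    (polyOneNorm p : ℤ) = ∑ i ∈ p.support, |p.coeff i| := by
  unfold polyOneNorm
  push_cast
  rfl

lemma aux_upper (p q : Polynomial ℤ) (n : ℤ) (hn : 0 ≤ n) (hq : ∀ i, |q.coeff i| ≤ n) (m : ℕ) :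
    |(p * q).coeff m| ≤ polyOneNorm p * n := by
  rw [aux_coeff_mul, aux_one_cast, Finset.sum_mul]
  refine (Finset.abs_sum_le_sum_abs _ _).trans (Finset.sum_le_sum fun i _ => ?_)
  rw [abs_mul]
  refine mul_le_mul_of_nonneg_left ?_ (abs_nonneg _)
  split_ifs
  · exact hq _
  · simpa using hn

lemma aux_quot (p q : Polynomial ℤ) (hdom : polyOneNorm p < 2 * polyInfNorm p)
    (n : ℤ) (hn : 0 ≤ n) (hf : ∀ i, |(p * q).coeff i| ≤ n) (j : ℕ) : |q.coeff j| ≤ n := by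
  have hp : p.support.Nonempty := by
    by_contra h
    rw [Finset.not_nonempty_iff_eq_empty] at h
    simp [polyInfNorm, h] at hdom
  obtain ⟨i, hi, hA⟩ := Finset.exists_mem_eq_sup p.support hp (fun i => (p.coeff i).natAbs)
  change polyInfNorm p = _ at hA
  rw [hA] at hdom
  have hd : (polyOneNorm p : ℤ) < 2 * |p.coeff i| := by
    rw [Int.abs_eq_natAbs]; exact_mod_cast hdom
  by_cases hq0 : q = 0
  · simpa [hq0] using hn
  have hqs : q.support.Nonempty := by simpa using hq0
  obtain ⟨l, hl, hmax⟩ := Finset.exists_max_image q.support (fun j => |q.coeff j|) hqs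
  have hmax' : ∀ j, |q.coeff j| ≤ |q.coeff l| := by
    intro j
    by_cases hj : j ∈ q.support
    · exact hmax j hj
    · rw [Polynomial.notMem_support_iff] at hj
      simp [hj]
  refine (hmax' j).trans ?_
  have h1 := hf (i + l)
  rw [aux_coeff_mul, ← Finset.add_sum_erase _ _ hi] at h1
  simp only [Nat.le_add_right, if_true, Nat.add_sub_cancel_left] at h1
  set S := ∑ x ∈ p.support.erase i,
    p.coeff x * (if x ≤ i + l then q.coeff (i + l - x) else 0) with hS
  have hSb : |S| ≤ (polyOneNorm p - |p.coeff i|) * |q.coeff l| := by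
    rw [aux_one_cast, ← Finset.add_sum_erase _ _ hi, add_sub_cancel_left, Finset.sum_mul]
    refine (Finset.abs_sum_le_sum_abs _ _).trans (Finset.sum_le_sum fun i _ => ?_)
    rw [abs_mul]
    refine mul_le_mul_of_nonneg_left ?_ (abs_nonneg _)
    split_ifs
    · exact hmax' _
    · simp
  have h2 : |p.coeff i| * |q.coeff l| ≤ n + |S| := by
    rw [← abs_mul]
    have := abs_sub_abs_le_abs_sub (p.coeff i * q.coeff l) (-S)
    rw [abs_neg, sub_neg_eq_add] at this
    linarith
  have h3 : 0 ≤ (2 * |p.coeff i| - polyOneNorm p - 1) * |q.coeff l| :=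
    mul_nonneg (by linarith) (abs_nonneg _)
  nlinarith

lemma aux_coeff (w : List ℤ) (i : ℕ) : (listToPoly w).coeff i = w.getD i 0 := by
  induction w generalizing i with
  | nil => simp [listToPoly]
  | cons c w ih =>
    cases i with
    | zero => simp [listToPoly]
    | succ i =>
      rw [listToPoly, Polynomial.coeff_add, Polynomial.coeff_C_succ, Polynomial.coeff_X_mul, ih]
      simp

lemma aux_append (a b : List ℤ) :
    listToPoly (a ++ b) = listToPoly a + Polynomial.X ^ a.length * listToPoly b := by
  induction a with
  | nil => simp [listToPoly]
  | cons c a ih => simp only [List.cons_append, listToPoly, ih, List.length_cons]; ring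

lemma aux_bound {n : ℕ} (w : List {c : ℤ // c.natAbs ≤ n}) (i : ℕ) :
    |(listToPoly (w.map Subtype.val)).coeff i| ≤ (n : ℤ) := by
  rw [aux_coeff]
  by_cases h : i < (w.map Subtype.val).length
  · rw [List.getD_eq_getElem _ _ h, List.getElem_map]
    have := (w[i]'(by simpa using h)).2
    rw [Int.abs_eq_natAbs]; exact_mod_cast this
  · rw [List.getD_eq_default _ _ (by simpa using h)]
    simp

lemma aux_finite (d : ℕ) (B : ℤ) :
    {r : Polynomial ℤ | (∀ i, |r.coeff i| ≤ B) ∧ ∀ i, d ≤ i → r.coeff i = 0}.Finite := by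
  have hfin : (Set.univ.pi fun _ : Fin d => Set.Icc (-B) B).Finite :=
    Set.Finite.pi fun _ => Set.finite_Icc _ _
  refine Set.Finite.of_finite_image (f := fun r : Polynomial ℤ => fun i : Fin d => r.coeff i)
    (hfin.subset ?_) ?_
  · rintro _ ⟨r, hr, rfl⟩ i _
    exact abs_le.mp (hr.1 i)
  · intro r hr s hs h
    ext i
    by_cases hi : i < d
    · exact congrFun h ⟨i, hi⟩
    · rw [hr.2 i (by omega), hs.2 i (by omega)]

/-- The remainder of a word (read from the high-order side). -/
lemma aux_rem (p y x : Polynomial ℤ) (hdom : polyOneNorm p < 2 * polyInfNorm p) (n k : ℕ)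
    (hy : ∀ i, k ≤ i → y.coeff i = 0) (hf : ∀ i, |(y + Polynomial.X ^ k * x).coeff i| ≤ (n : ℤ))
    (hdvd : p ∣ y + Polynomial.X ^ k * x) :
    ∃ r : Polynomial ℤ, ((∀ i, |r.coeff i| ≤ (polyOneNorm p * n : ℤ)) ∧
      ∀ i, p.natDegree ≤ i → r.coeff i = 0) ∧ p ∣ x - r := by
  obtain ⟨q, hq⟩ := hdvd
  rw [hq] at hf
  have hqb := aux_quot p q hdom n (by positivity) hf
  set q0 : Polynomial ℤ := ∑ i ∈ Finset.range k, Polynomial.C (q.coeff i) * Polynomial.X ^ i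
    with hq0
  have hc : ∀ i, q0.coeff i = if i < k then q.coeff i else 0 := by
    intro i
    simp [hq0, Polynomial.finsetSum_coeff, Polynomial.coeff_X_pow]
  obtain ⟨q1, hq1⟩ : Polynomial.X ^ k ∣ q - q0 := by
    rw [Polynomial.X_pow_dvd_iff]
    intro i hi
    simp [hc, hi]
  have key : Polynomial.X ^ k * (x - p * q1) = p * q0 - y := by
    linear_combination hq + p * hq1
  have hcr : ∀ i, (x - p * q1).coeff i = (p * q0).coeff (i + k) := by
    intro i
    have := congrArg (fun f => f.coeff (i + k)) key
    simpa [Polynomial.coeff_X_pow_mul, hy (i + k) (by omega)] using this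
  refine ⟨x - p * q1, ⟨fun i => ?_, fun i hi => ?_⟩, by simp⟩
  · rw [hcr]
    refine aux_upper p q0 n (by positivity) (fun i => ?_) _
    rw [hc]
    split_ifs
    · exact hqb i
    · simp
  · rw [hcr, aux_coeff_mul]
    refine Finset.sum_eq_zero fun j hj => ?_
    have := Polynomial.le_natDegree_of_mem_supp j hj
    rw [if_pos (by omega), hc, if_neg (by omega), mul_zero]

theorem divisibility_language_regular
    (p : Polynomial ℤ) (hmonic : p.Monic) (hdom : polyOneNorm p < 2 * polyInfNorm p)
    (n : ℕ) (hn : 1 ≤ n) :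
    Language.IsRegular
      {w : List {c : ℤ // c.natAbs ≤ n} | p ∣ listToPoly (w.map Subtype.val)} := by
  apply Language.IsRegular.of_reverse
  apply Language.IsRegular.of_finite_range_leftQuotient
  let F : Polynomial ℤ → Language {c : ℤ // c.natAbs ≤ n} := fun r =>
    {y | p ∣ listToPoly (y.reverse.map Subtype.val) + Polynomial.X ^ y.length * r}
  have hE : ∀ x y : List {c : ℤ // c.natAbs ≤ n},
      listToPoly ((x ++ y).reverse.map Subtype.val) =
      listToPoly (y.reverse.map Subtype.val) +
        Polynomial.X ^ y.length * listToPoly (x.reverse.map Subtype.val) := by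
    intro x y
    rw [List.reverse_append, List.map_append, aux_append]
    simp
  refine (((aux_finite p.natDegree (polyOneNorm p * n)).image F).insert
    (∅ : Set (List {c : ℤ // c.natAbs ≤ n}))).subset ?_
  rintro _ ⟨x, rfl⟩
  set Q := Language.leftQuotient (Language.reverse
    {w : List {c : ℤ // c.natAbs ≤ n} | p ∣ listToPoly (w.map Subtype.val)}) x with hQ
  have hmem : ∀ y, y ∈ Q ↔ p ∣ listToPoly (y.reverse.map Subtype.val) +
        Polynomial.X ^ y.length * listToPoly (x.reverse.map Subtype.val) := by
    intro y
    rw [← hE]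
    exact Iff.rfl
  by_cases hne : ∃ y, y ∈ Q
  · right
    obtain ⟨y, hy⟩ := hne
    rw [hmem] at hy
    obtain ⟨r, hr, hdvd⟩ := aux_rem p _ _ hdom n y.length (fun i hi => by
      rw [aux_coeff, List.getD_eq_default _ _ (by simpa using hi)]) (fun i => by
      rw [← hE]; exact aux_bound _ _) hy
    refine ⟨r, hr, ?_⟩
    ext z
    rw [hmem]
    change p ∣ _ ↔ _
    rw [← dvd_add_left (hdvd.mul_left (Polynomial.X ^ z.length))]
    ring_nf
  · left
    push Not at hne
    exact Set.eq_empty_iff_forall_notMem.mpr hne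
end
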